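/- There exists an absolute constant C > 0 with the following property. Let q ≥ 1, let d, N ∈ ℕ satisfy N^{−11} ≤ κ_q(d,N) ≤ e^{−12/q}, and set n = N^q. Let k ≥ 2 be an integer, let u ∈ U(B_N^q ∩ ℤ^d), and let l, m ∈ {0, 1, …, ⌊n⌋} be integers with l ≥ κ_q(d,N)^{q/22}·n / k^6. Then |A(u, l, m)| ≤ C·n^{−3}·|A(u, 0, m + ⌊l·k^q⌋)|. -/

import Mathlib

open Classical in
noncomputable def latticeBall (q : ℝ) (d : ℕ) (t : ℝ) : Finset (Fin d → ℤ) :=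
  (Finset.Icc (fun _ => -(⌈t⌉₊ : ℤ)) (fun _ => (⌈t⌉₊ : ℤ))).filter
    (fun x => ∑ i, |(x i : ℝ)| ^ q ≤ t ^ q)


/-- `u(x)`: zero out the coordinates whose absolute value is `1` or `k`. -/
def uPart (d : ℕ) (k : ℕ) (x : Fin d → ℤ) : Fin d → ℤ :=
  fun j => if |x j| = 1 ∨ |x j| = (k : ℤ) then 0 else x j

open Classical in
/-- The set `A(u, l, m)`. -/
noncomputable def Aset (q : ℝ) (d N : ℕ) (k : ℕ) (u : Fin d → ℤ) (l m : ℕ) :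
    Finset (Fin d → ℤ) :=
  (latticeBall q d N).filter (fun x => uPart d k x = u ∧
    (Finset.univ.filter (fun i => |x i| = (k : ℤ))).card = l ∧
    (Finset.univ.filter (fun i => |x i| = 1)).card = m)

/-!
Write `n = N ^ q`, `L = ⌊l k ^ q⌋` and let `D` be the number of zero coordinates of `u`. Trading `l`
coordinates `±k` for `L` coordinates `±1` does not increase the `ℓ^q` size, so as soon as
`A(u, l, m)` is nonempty both sets are counted exactly, by
`D.choose l * (D - l).choose m * 2 ^ (l + m)` and `D.choose (m + L) * 2 ^ (m + L)`. Since
`d ≤ 2 (D - m - L)`, the ratio of the two counts is at most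
`n ^ L / (l! d ^ (L - l)) = (n ^ l / l!) (n / d) ^ (L - l)`.
As `L ≥ k l`, the smallness of `n / d` and the lower bound on `l` make this at most `exp (-k l)`.
Finally, `n ^ (-11) ≤ n / d` turns the lower bound on `l` into `n ^ (1 / 2) ≤ (k l) ^ 6`, so that
`exp (-k l) ≤ 36! / (k l) ^ 36 ≤ 36! / n ^ 3`.
-/

section

open Finset Real

/-- The coordinates at which the integer vector `x` has absolute value `a`. In particular
`absLevel 0 x` is the set of zero coordinates of `x`. -/
def absLevel {ι : Type*} [Fintype ι] (a : ℤ) (x : ι → ℤ) : Finset ι := {i | |x i| = a}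

@[simp]
lemma mem_absLevel {ι : Type*} [Fintype ι] {a : ℤ} {x : ι → ℤ} {i : ι} :
    i ∈ absLevel a x ↔ |x i| = a := by
  simp [absLevel]

lemma card_le_card_absLevel_zero_add_sum_rpow {ι : Type*} [Fintype ι] {q : ℝ} (hq : 0 ≤ q)
    (u : ι → ℤ) :
    (Fintype.card ι : ℝ) ≤ #(absLevel 0 u) + ∑ i, |(u i : ℝ)| ^ q := by
  have one_le (i : ι) : (1 : ℝ) ≤ (if |u i| = 0 then 1 else 0) + |(u i : ℝ)| ^ q := by
    split_ifs with hi
    · linarith [rpow_nonneg (abs_nonneg (u i : ℝ)) q]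
    · have : (1 : ℝ) ≤ |(u i : ℝ)| := by exact_mod_cast Int.one_le_abs (abs_ne_zero.mp hi)
      linarith [one_le_rpow this hq]
  calc (Fintype.card ι : ℝ) = ∑ _i : ι, (1 : ℝ) := by simp
    _ ≤ ∑ i, ((if |u i| = 0 then 1 else 0) + |(u i : ℝ)| ^ q) :=
      sum_le_sum fun i _ ↦ one_le i
    _ = #(absLevel 0 u) + ∑ i, |(u i : ℝ)| ^ q := by
      rw [sum_add_distrib, sum_boole, absLevel]

lemma mem_latticeBall {q : ℝ} (hq : 0 < q) {d : ℕ} {t : ℝ} (ht : 0 ≤ t) {x : Fin d → ℤ} :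
    x ∈ latticeBall q d t ↔ ∑ i, |(x i : ℝ)| ^ q ≤ t ^ q := by
  refine ⟨fun hx ↦ (mem_filter.mp hx).2, fun hx ↦ mem_filter.mpr ⟨?_, hx⟩⟩
  have abs_le_ceil (i : Fin d) : |x i| ≤ (⌈t⌉₊ : ℤ) := by
    have : |(x i : ℝ)| ^ q ≤ t ^ q :=
      (single_le_sum (f := fun j ↦ |(x j : ℝ)| ^ q)
        (fun j _ ↦ rpow_nonneg (abs_nonneg _) q) (mem_univ i)).trans hx
    have : |(x i : ℝ)| ≤ ⌈t⌉₊ :=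
      ((rpow_le_rpow_iff (abs_nonneg _) ht hq).mp this).trans (Nat.le_ceil t)
    exact_mod_cast this
  exact mem_Icc.mpr ⟨fun i ↦ (abs_le.mp (abs_le_ceil i)).1, fun i ↦ (abs_le.mp (abs_le_ceil i)).2⟩

lemma uPart_uPart (d k : ℕ) (x : Fin d → ℤ) : uPart d k (uPart d k x) = uPart d k x := by
  funext j
  simp only [uPart]
  split_ifs <;> rfl

lemma sum_rpow_eq_sum_uPart_add {q : ℝ} (hq : 0 < q) {d k : ℕ} (hk : k ≠ 1) (x : Fin d → ℤ) :
    ∑ i, |(x i : ℝ)| ^ q =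
      ∑ i, |(uPart d k x i : ℝ)| ^ q + #(absLevel k x) * (k : ℝ) ^ q + #(absLevel 1 x) := by
  have summand (i : Fin d) : |(x i : ℝ)| ^ q = |(uPart d k x i : ℝ)| ^ q
      + (if |x i| = k then (k : ℝ) ^ q else 0) + (if |x i| = 1 then 1 else 0) := by
    have cast_abs : |(x i : ℝ)| = (|x i| : ℤ) := by push_cast; rfl
    by_cases h1 : |x i| = 1
    · have : (1 : ℤ) ≠ k := by exact_mod_cast hk.symm
      simp [uPart, cast_abs, h1, this, zero_rpow hq.ne']
    by_cases h2 : |x i| = k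
    · simp [uPart, cast_abs, h2, hk, zero_rpow hq.ne']
    · simp [uPart, h1, h2]
  rw [sum_congr rfl fun i _ ↦ summand i, sum_add_distrib, sum_add_distrib, sum_boole,
    ← sum_filter, sum_const, nsmul_eq_mul, absLevel, absLevel]

lemma mem_Aset {q : ℝ} (hq : 0 < q) {d N k : ℕ} (hk : k ≠ 1) {u x : Fin d → ℤ} {l m : ℕ} :
    x ∈ Aset q d N k u l m ↔
      ∑ i, |(u i : ℝ)| ^ q + l * (k : ℝ) ^ q + m ≤ (N : ℝ) ^ q ∧
        uPart d k x = u ∧ #(absLevel k x) = l ∧ #(absLevel 1 x) = m := by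
  rw [Aset, mem_filter, mem_latticeBall hq N.cast_nonneg, sum_rpow_eq_sum_uPart_add hq hk]
  refine and_congr_left ?_
  rintro ⟨rfl, rfl, rfl⟩
  rfl

/-- The values that coordinate `i` of a vector `x` may take when `u(x) = u` and `x` is `±k` exactly
on `K` and `±1` exactly on `O`. -/
def coordValues {d : ℕ} (k : ℕ) (u : Fin d → ℤ) (K O : Finset (Fin d)) (i : Fin d) : Finset ℤ :=
  if i ∈ K then {(k : ℤ), -(k : ℤ)} else if i ∈ O then {1, -1} else {u i}

lemma mem_piFinset_coordValues {d k : ℕ} (hk : 2 ≤ k) {u x : Fin d → ℤ}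
    (hu : uPart d k u = u) {K O : Finset (Fin d)} (hK : K ⊆ absLevel 0 u)
    (hO : O ⊆ absLevel 0 u \ K) :
    x ∈ Fintype.piFinset (coordValues k u K O) ↔
      uPart d k x = u ∧ absLevel k x = K ∧ absLevel 1 x = O := by
  simp only [funext_iff, Finset.ext_iff, mem_absLevel, Fintype.mem_piFinset, ← forall_and]
  refine forall_congr' fun i ↦ ?_
  have hui := congrFun hu i
  have hKi := @hK i
  have hOi := @hO i
  simp only [mem_sdiff, mem_absLevel, abs_eq_zero] at hKi hOi
  simp only [uPart] at hui ⊢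
  simp only [coordValues]
  grind

lemma card_piFinset_coordValues {d k : ℕ} (hk : k ≠ 0) (u : Fin d → ℤ) {K O : Finset (Fin d)}
    (hKO : Disjoint K O) :
    #(Fintype.piFinset (coordValues k u K O)) = 2 ^ (#K + #O) := by
  have card_coordValues (i : Fin d) : #(coordValues k u K O i) = if i ∈ K ∪ O then 2 else 1 := by
    have : (k : ℤ) ≠ -k := by omega
    by_cases hiK : i ∈ K <;> by_cases hiO : i ∈ O <;> simp [coordValues, hiK, hiO, this]
  rw [Fintype.card_piFinset, prod_congr rfl fun i _ ↦ card_coordValues i, prod_ite_mem, univ_inter,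
    prod_const, card_union_of_disjoint hKO]

lemma card_Aset {q : ℝ} (hq : 0 < q) {d N k : ℕ} (hk : 2 ≤ k) {u : Fin d → ℤ}
    (hu : uPart d k u = u) {l m : ℕ}
    (hsize : ∑ i, |(u i : ℝ)| ^ q + l * (k : ℝ) ^ q + m ≤ (N : ℝ) ^ q) :
    #(Aset q d N k u l m) =
      (#(absLevel 0 u)).choose l * (#(absLevel 0 u) - l).choose m * 2 ^ (l + m) := by
  let supports : Finset (Σ _ : Finset (Fin d), Finset (Fin d)) :=
    (powersetCard l (absLevel 0 u)).sigma fun K ↦ powersetCard m (absLevel 0 u \ K)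
  have card_supports :
      #supports = (#(absLevel 0 u)).choose l * (#(absLevel 0 u) - l).choose m := by
    rw [card_sigma, ← card_powersetCard l]
    refine sum_const_nat fun K hK ↦ ?_
    obtain ⟨hKu, rfl⟩ := mem_powersetCard.mp hK
    rw [card_powersetCard, card_sdiff_of_subset hKu]
  have mapsTo : Set.MapsTo (fun x ↦ (⟨absLevel k x, absLevel 1 x⟩ : Σ _, _))
      (Aset q d N k u l m : Set (Fin d → ℤ)) (supports : Set _) := by
    intro x hx
    obtain ⟨-, rfl, rfl, rfl⟩ := (mem_Aset hq (by omega)).mp hx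
    simp only [supports, coe_sigma, Set.mem_sigma_iff, mem_coe, mem_powersetCard, and_true]
    grind [mem_absLevel, uPart]
  rw [card_eq_sum_card_fiberwise mapsTo, ← card_supports]
  refine sum_const_nat fun ⟨K, O⟩ hKO ↦ ?_
  simp only [supports, mem_sigma, mem_powersetCard] at hKO
  obtain ⟨⟨hK, rfl⟩, hO, rfl⟩ := hKO
  rw [← card_piFinset_coordValues (by omega : k ≠ 0) u (disjoint_sdiff.mono_right hO)]
  congr 1
  ext x
  rw [mem_filter, mem_Aset hq (by omega), mem_piFinset_coordValues hk hu hK hO]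
  grind

lemma choose_mul_choose_mul_factorial_mul_descFactorial (D m : ℕ) {l L : ℕ} (hlL : l ≤ L) :
    D.choose l * (D - l).choose m * (l.factorial * (D - (l + m)).descFactorial (L - l)) =
      (m + L).descFactorial L * D.choose (m + L) := by
  have split_lm : (D - l).descFactorial m * D.descFactorial l = D.descFactorial (l + m) := by
    simpa using Nat.descFactorial_mul_descFactorial (n := D) (Nat.le_add_right l m)
  have split_mL : (D - (l + m)).descFactorial (L - l) * D.descFactorial (l + m) =
      D.descFactorial (m + L) := by
    rw [← Nat.descFactorial_mul_descFactorial (n := D) (by omega : l + m ≤ m + L)]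
    congr 2
    omega
  have factorial_split : m.factorial * (m + L).descFactorial L = (m + L).factorial := by
    simpa using Nat.factorial_mul_descFactorial (Nat.le_add_left L m)
  apply Nat.eq_of_mul_eq_mul_left m.factorial_pos
  calc m.factorial *
        (D.choose l * (D - l).choose m * (l.factorial * (D - (l + m)).descFactorial (L - l)))
      = (D - (l + m)).descFactorial (L - l) *
          ((m.factorial * (D - l).choose m) * (l.factorial * D.choose l)) := by ring
    _ = (m + L).factorial * D.choose (m + L) := by
      rw [← Nat.descFactorial_eq_factorial_mul_choose, ← Nat.descFactorial_eq_factorial_mul_choose,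
        split_lm, split_mL, Nat.descFactorial_eq_factorial_mul_choose]
    _ = m.factorial * ((m + L).descFactorial L * D.choose (m + L)) := by
      rw [← factorial_split, mul_assoc]

lemma choose_mul_choose_mul_two_pow_le (D m : ℕ) {l L : ℕ} (hlL : l ≤ L) :
    D.choose l * (D - l).choose m * 2 ^ (l + m) *
        (l.factorial * (2 * (D - (m + L))) ^ (L - l)) ≤
      (m + L) ^ L * (D.choose (m + L) * 2 ^ (m + L)) := by
  have pow_le : (D - (m + L)) ^ (L - l) ≤ (D - (l + m)).descFactorial (L - l) :=
    (Nat.pow_le_pow_left (by omega) _).trans (Nat.pow_sub_le_descFactorial _ _)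
  have two_pow : 2 ^ (m + L) = 2 ^ (l + m) * 2 ^ (L - l) := by
    rw [← pow_add]
    congr 1
    omega
  calc D.choose l * (D - l).choose m * 2 ^ (l + m) *
        (l.factorial * (2 * (D - (m + L))) ^ (L - l))
      = D.choose l * (D - l).choose m * (l.factorial * (D - (m + L)) ^ (L - l)) *
          2 ^ (m + L) := by rw [two_pow, mul_pow]; ring
    _ ≤ D.choose l * (D - l).choose m *
          (l.factorial * (D - (l + m)).descFactorial (L - l)) * 2 ^ (m + L) := by gcongr
    _ = (m + L).descFactorial L * (D.choose (m + L) * 2 ^ (m + L)) := by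
      rw [choose_mul_choose_mul_factorial_mul_descFactorial D m hlL, mul_assoc]
    _ ≤ (m + L) ^ L * (D.choose (m + L) * 2 ^ (m + L)) := by
      gcongr
      exact Nat.descFactorial_le_pow _ _

lemma card_Aset_mul_le {q : ℝ} (hq : 0 < q) {d N k : ℕ} (hk : 2 ≤ k)
    (hd : 2 * (N : ℝ) ^ q ≤ d) (u : Fin d → ℤ) {l L : ℕ} (m : ℕ) (hlL : l ≤ L)
    (hL : (L : ℝ) ≤ l * (k : ℝ) ^ q) :
    (#(Aset q d N k u l m) : ℝ) * (l.factorial * (d : ℝ) ^ (L - l)) ≤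
      ((N : ℝ) ^ q) ^ L * #(Aset q d N k u 0 (m + L)) := by
  rcases (Aset q d N k u l m).eq_empty_or_nonempty with hA | ⟨x, hx⟩
  · rw [hA, card_empty, Nat.cast_zero, zero_mul]
    positivity
  obtain ⟨hsize, hxu, -⟩ := (mem_Aset hq (by omega)).mp hx
  have hu : uPart d k u = u := by rw [← hxu, uPart_uPart]
  set D := #(absLevel 0 u)
  have hD : (d : ℝ) ≤ D + ∑ i, |(u i : ℝ)| ^ q := by
    simpa using card_le_card_absLevel_zero_add_sum_rpow hq.le u
  have sum_nonneg : 0 ≤ ∑ i, |(u i : ℝ)| ^ q := by positivity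
  have hmL : ((m + L : ℕ) : ℝ) ≤ (N : ℝ) ^ q := by push_cast; linarith
  have hdD : (d : ℝ) ≤ (2 * (D - (m + L)) : ℕ) := by
    have : (D : ℝ) ≤ (D - (m + L) : ℕ) + (m + L : ℕ) := by exact_mod_cast le_tsub_add
    push_cast at this ⊢
    linarith
  have hcard : #(Aset q d N k u 0 (m + L)) = D.choose (m + L) * 2 ^ (m + L) := by
    rw [card_Aset hq hk hu (by push_cast; linarith)]
    simp [D]
  calc (#(Aset q d N k u l m) : ℝ) * (l.factorial * (d : ℝ) ^ (L - l))
      ≤ #(Aset q d N k u l m) * (l.factorial * ((2 * (D - (m + L)) : ℕ) : ℝ) ^ (L - l)) := by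
        gcongr
    _ ≤ ((m + L : ℕ) : ℝ) ^ L * #(Aset q d N k u 0 (m + L)) := by
        rw [card_Aset hq hk hu hsize, hcard]
        exact_mod_cast choose_mul_choose_mul_two_pow_le D m hlL
    _ ≤ ((N : ℝ) ^ q) ^ L * #(Aset q d N k u 0 (m + L)) := by gcongr

lemma exp_one_mul_pow_six_mul_rpow_le_exp_neg {ρ k : ℝ} (hρ : 0 ≤ ρ) (hρ12 : ρ ≤ exp (-12))
    (hk : 2 ≤ k) :
    exp 1 * (k ^ 6 * ρ ^ (k - 1 - 1 / 22)) ≤ exp (-k) := by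
  have hk6 : k ^ 6 ≤ exp (6 * (k - 1)) := by
    calc k ^ 6 ≤ exp (k - 1) ^ 6 := by
          gcongr
          linarith [add_one_le_exp (k - 1)]
      _ = exp (6 * (k - 1)) := by rw [← exp_nat_mul]; norm_num
  have hρk : ρ ^ (k - 1 - 1 / 22) ≤ exp (-12 * (k - 1 - 1 / 22)) := by
    rw [exp_mul]
    exact rpow_le_rpow hρ hρ12 (by linarith)
  calc exp 1 * (k ^ 6 * ρ ^ (k - 1 - 1 / 22))
      ≤ exp 1 * (exp (6 * (k - 1)) * exp (-12 * (k - 1 - 1 / 22))) := by gcongr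
    _ = exp (1 + (6 * (k - 1) + -12 * (k - 1 - 1 / 22))) := by rw [exp_add, exp_add]
    _ ≤ exp (-k) := exp_le_exp.mpr (by linarith)

lemma pow_div_factorial_le_exp_one_mul_pow {n c : ℝ} (hn : 0 ≤ n) (hc : 0 ≤ c) {l : ℕ}
    (hnc : n ≤ l * c) : n ^ l / l.factorial ≤ (exp 1 * c) ^ l := by
  calc n ^ l / l.factorial ≤ (l * c) ^ l / l.factorial := by gcongr
    _ = (l : ℝ) ^ l / l.factorial * c ^ l := by rw [mul_pow, mul_div_right_comm]
    _ ≤ exp l * c ^ l := by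
      gcongr
      exact pow_div_factorial_le_exp _ l.cast_nonneg _
    _ = (exp 1 * c) ^ l := by rw [mul_pow, exp_one_pow]

lemma pow_div_factorial_mul_pow_le_exp_neg {n ρ : ℝ} (hn : 0 ≤ n) (hρ : 0 < ρ)
    (hρ12 : ρ ≤ exp (-12)) {k l L : ℕ} (hk : 2 ≤ k) (hL : k * l ≤ L)
    (hl : ρ ^ (1 / 22 : ℝ) * n ≤ l * (k : ℝ) ^ 6) :
    n ^ l / l.factorial * ρ ^ (L - l) ≤ exp (-(k * l)) := by
  have hnc : n ≤ l * ((k : ℝ) ^ 6 * ρ ^ (-(1 / 22) : ℝ)) := by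
    rw [rpow_neg hρ.le, ← div_eq_mul_inv, ← mul_div_assoc, le_div_iff₀ (by positivity), mul_comm]
    exact hl
  set c : ℝ := (k : ℝ) ^ 6 * ρ ^ (-(1 / 22) : ℝ)
  have hpow : ρ ^ (L - l) ≤ (ρ ^ (k - 1)) ^ l := by
    rw [← pow_mul]
    refine pow_le_pow_of_le_one hρ.le (hρ12.trans (exp_le_one_iff.mpr (by norm_num))) ?_
    rw [Nat.sub_mul, one_mul]
    exact Nat.sub_le_sub_right hL l
  have hc : c * ρ ^ (k - 1) = (k : ℝ) ^ 6 * ρ ^ ((k : ℝ) - 1 - 1 / 22) := by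
    rw [mul_assoc, ← rpow_natCast ρ, ← rpow_add hρ, Nat.cast_sub (by omega), Nat.cast_one]
    congr 2
    ring
  calc n ^ l / l.factorial * ρ ^ (L - l) ≤ (exp 1 * c) ^ l * (ρ ^ (k - 1)) ^ l := by
        gcongr
        exact pow_div_factorial_le_exp_one_mul_pow hn (by positivity) hnc
    _ = (exp 1 * ((k : ℝ) ^ 6 * ρ ^ ((k : ℝ) - 1 - 1 / 22))) ^ l := by
      rw [← mul_pow, mul_assoc, hc]
    _ ≤ exp (-k) ^ l := by
      gcongr
      exact exp_one_mul_pow_six_mul_rpow_le_exp_neg hρ.le hρ12 (by exact_mod_cast hk)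
    _ = exp (-(k * l)) := by rw [← exp_nat_mul]; congr 1; ring

lemma pow_three_le_mul_pow_of_rpow_mul_le {n ρ : ℝ} (hn : 0 < n) (hρ : n ^ (-11 : ℝ) ≤ ρ) {k l : ℕ}
    (hl : ρ ^ (1 / 22 : ℝ) * n ≤ l * (k : ℝ) ^ 6) :
    n ^ 3 ≤ ((k : ℝ) * l) ^ 36 := by
  have sqrt_le : n ^ (1 / 2 : ℝ) ≤ ((k : ℝ) * l) ^ 6 := by
    calc n ^ (1 / 2 : ℝ) = (n ^ (-11 : ℝ)) ^ (1 / 22 : ℝ) * n := by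
          rw [← rpow_mul hn.le, ← rpow_add_one hn.ne']
          norm_num
      _ ≤ ρ ^ (1 / 22 : ℝ) * n := by gcongr
      _ ≤ l * (k : ℝ) ^ 6 := hl
      _ ≤ (l : ℝ) ^ 6 * (k : ℝ) ^ 6 := by
        gcongr
        exact_mod_cast Nat.le_self_pow (by norm_num) l
      _ = ((k : ℝ) * l) ^ 6 := by ring
  calc n ^ 3 = (n ^ (1 / 2 : ℝ)) ^ 6 := by
        rw [← rpow_natCast, ← rpow_natCast, ← rpow_mul hn.le]
        norm_num
    _ ≤ (((k : ℝ) * l) ^ 6) ^ 6 := by gcongr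
    _ = ((k : ℝ) * l) ^ 36 := by ring

lemma exp_neg_le_factorial_mul_inv_of_le_pow {x y : ℝ} (hx : 0 ≤ x) (hy : 0 < y) {j : ℕ}
    (hyx : y ≤ x ^ j) : exp (-x) ≤ j.factorial * y⁻¹ := by
  have : y / j.factorial ≤ exp x := by
    calc y / j.factorial ≤ x ^ j / j.factorial := by gcongr
      _ ≤ exp x := pow_div_factorial_le_exp x hx j
  calc exp (-x) = (exp x)⁻¹ := exp_neg x
    _ ≤ (y / j.factorial)⁻¹ := inv_anti₀ (by positivity) this
    _ = j.factorial * y⁻¹ := by rw [inv_div, div_eq_mul_inv]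

lemma pow_le_factorial_mul_inv_pow_three_mul {n d : ℝ} (hn : 0 < n) (hd : 0 < d)
    (h12 : n / d ≤ exp (-12)) (h11 : n ^ (-11 : ℝ) ≤ n / d) {k l L : ℕ} (hk : 2 ≤ k)
    (hL : k * l ≤ L) (hl : (n / d) ^ (1 / 22 : ℝ) * n / (k : ℝ) ^ 6 ≤ l) :
    n ^ L ≤ Nat.factorial 36 * n⁻¹ ^ 3 * (l.factorial * d ^ (L - l)) := by
  have hl' : (n / d) ^ (1 / 22 : ℝ) * n ≤ l * (k : ℝ) ^ 6 := by
    rwa [div_le_iff₀ (by positivity)] at hl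
  have hlL : l ≤ L := (Nat.le_mul_of_pos_left l (by omega)).trans hL
  calc n ^ L = n ^ l / l.factorial * (n / d) ^ (L - l) * (l.factorial * d ^ (L - l)) := by
        rw [← pow_mul_pow_sub n hlL, div_pow]
        field_simp
    _ ≤ exp (-(k * l)) * (l.factorial * d ^ (L - l)) := by
        gcongr
        exact pow_div_factorial_mul_pow_le_exp_neg hn.le (by positivity) h12 hk hL hl'
    _ ≤ Nat.factorial 36 * n⁻¹ ^ 3 * (l.factorial * d ^ (L - l)) := by
        gcongr
        rw [inv_pow]
        exact exp_neg_le_factorial_mul_inv_of_le_pow (by positivity) (by positivity)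
          (pow_three_le_mul_pow_of_rpow_mul_le hn h11 hl')

lemma two_mul_le_of_div_le_exp_neg_twelve {n d : ℝ} (hd : 0 < d) (h : n / d ≤ exp (-12)) :
    2 * n ≤ d := by
  have : exp (-12) ≤ 1 / 2 := by
    rw [exp_neg, one_div]
    exact inv_anti₀ two_pos (by linarith [add_one_le_exp (12 : ℝ)])
  linarith [(div_le_iff₀ hd).mp (h.trans this)]

lemma mul_le_floor_mul_rpow {q : ℝ} (hq : 1 ≤ q) {k : ℕ} (hk : 1 ≤ k) (l : ℕ) :
    k * l ≤ ⌊(l : ℝ) * (k : ℝ) ^ q⌋₊ := by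
  apply Nat.le_floor
  rw [Nat.cast_mul, mul_comm]
  gcongr
  exact self_le_rpow_of_one_le (by exact_mod_cast hk) hq

lemma card_Aset_le_factorial_mul {q : ℝ} (hq : 1 ≤ q) {d N k : ℕ} (hd : 0 < d) (hN : 0 < N)
    (h11 : ((N : ℝ) ^ q) ^ (-11 : ℝ) ≤ (N : ℝ) ^ q / d)
    (h12 : (N : ℝ) ^ q / d ≤ exp (-12)) (hk : 2 ≤ k) (u : Fin d → ℤ) {l : ℕ} (m : ℕ)
    (hl : ((N : ℝ) ^ q / d) ^ (1 / 22 : ℝ) * (N : ℝ) ^ q / (k : ℝ) ^ 6 ≤ l) :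
    (#(Aset q d N k u l m) : ℝ) ≤ Nat.factorial 36 * ((N : ℝ) ^ q)⁻¹ ^ 3 *
      #(Aset q d N k u 0 (m + ⌊(l : ℝ) * (k : ℝ) ^ q⌋₊)) := by
  have hd0 : (0 : ℝ) < d := by exact_mod_cast hd
  set L := ⌊(l : ℝ) * (k : ℝ) ^ q⌋₊
  have hkL : k * l ≤ L := mul_le_floor_mul_rpow hq (by omega) l
  have hlL : l ≤ L := (Nat.le_mul_of_pos_left l (by omega)).trans hkL
  have hL : (L : ℝ) ≤ l * (k : ℝ) ^ q := Nat.floor_le (by positivity)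
  refine le_of_mul_le_mul_right ?_ (by positivity : 0 < (l.factorial : ℝ) * (d : ℝ) ^ (L - l))
  calc (#(Aset q d N k u l m) : ℝ) * (l.factorial * (d : ℝ) ^ (L - l))
      ≤ ((N : ℝ) ^ q) ^ L * #(Aset q d N k u 0 (m + L)) :=
        card_Aset_mul_le (by linarith) hk (two_mul_le_of_div_le_exp_neg_twelve hd0 h12) u m hlL hL
    _ ≤ Nat.factorial 36 * ((N : ℝ) ^ q)⁻¹ ^ 3 * (l.factorial * (d : ℝ) ^ (L - l)) *
          #(Aset q d N k u 0 (m + L)) := by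
        gcongr
        exact pow_le_factorial_mul_inv_pow_three_mul (by positivity) hd0 h12 h11 hk hkL hl
    _ = Nat.factorial 36 * ((N : ℝ) ^ q)⁻¹ ^ 3 * #(Aset q d N k u 0 (m + L)) *
          (l.factorial * (d : ℝ) ^ (L - l)) := by ring

lemma div_rpow_one_div_rpow {a b q : ℝ} (ha : 0 ≤ a) (hb : 0 ≤ b) (hq : q ≠ 0) :
    (a / b ^ (1 / q)) ^ q = a ^ q / b := by
  rw [div_rpow ha (by positivity), one_div, rpow_inv_rpow hb hq]

lemma rpow_le_exp_of_le_exp_div {x a q : ℝ} (hx : 0 ≤ x) (hq : 0 < q) (h : x ≤ exp (a / q)) :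
    x ^ q ≤ exp a := by
  calc x ^ q ≤ exp (a / q) ^ q := by gcongr
    _ = exp a := by rw [← exp_mul, div_mul_cancel₀ a hq.ne']

end

theorem stmt19 :
    ∃ C : ℝ, 0 < C ∧ ∀ (q : ℝ), 1 ≤ q → ∀ d N : ℕ, 0 < d → 0 < N →
      (N : ℝ) ^ (-(11 : ℝ)) ≤ (N : ℝ) / (d : ℝ) ^ (1 / q) →
      (N : ℝ) / (d : ℝ) ^ (1 / q) ≤ Real.exp (-12 / q) →
      ∀ k : ℕ, 2 ≤ k →
      ∀ u ∈ (latticeBall q d N).image (uPart d k),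
      ∀ l m : ℕ, (l : ℝ) ≤ (N : ℝ) ^ q → (m : ℝ) ≤ (N : ℝ) ^ q →
      ((N : ℝ) / (d : ℝ) ^ (1 / q)) ^ (q / 22) * (N : ℝ) ^ q / (k : ℝ) ^ 6 ≤ (l : ℝ) →
      ((Aset q d N k u l m).card : ℝ)
        ≤ C * ((N : ℝ) ^ q)⁻¹ ^ 3 *
          ((Aset q d N k u 0 (m + ⌊(l : ℝ) * (k : ℝ) ^ q⌋₊)).card : ℝ) := by
  refine ⟨Nat.factorial 36, by positivity, ?_⟩
  intro q hq d N hd hN h11 h12 k hk u _ l m _ _ hl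
  have hq0 : 0 < q := by linarith
  have hκ : ((N : ℝ) / (d : ℝ) ^ (1 / q)) ^ q = (N : ℝ) ^ q / d :=
    div_rpow_one_div_rpow N.cast_nonneg d.cast_nonneg hq0.ne'
  set κ : ℝ := (N : ℝ) / (d : ℝ) ^ (1 / q)
  have hκ0 : 0 ≤ κ := by positivity
  apply card_Aset_le_factorial_mul hq hd hN ?_ ?_ hk u m ?_
  · calc ((N : ℝ) ^ q) ^ (-11 : ℝ) = ((N : ℝ) ^ (-11 : ℝ)) ^ q := by
          rw [← Real.rpow_mul N.cast_nonneg, mul_comm, Real.rpow_mul N.cast_nonneg]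
      _ ≤ κ ^ q := by gcongr
      _ = (N : ℝ) ^ q / d := hκ
  · exact hκ ▸ rpow_le_exp_of_le_exp_div hκ0 hq0 h12
  · rwa [← hκ, ← Real.rpow_mul hκ0, mul_one_div]
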